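/- Let k be a field and R″ = k[x,y]/(x²,y²), a 4-dimensional Frobenius commutative k-algebra. Then there exists a Proj-periodic R″-module that is not pure-projective; that is, there is an R″-module N admitting a short exact sequence 0 → N → P → N → 0 with P a projective R″-module, such that N is not a pure-projective R″-module. -/

import Mathlib

/-!
STATEMENT 18: Let k be a field and R″ = k[x,y]/(x², y²). Then there exists a
Proj-periodic R″-module that is not pure-projective: an R″-module N with a
short exact sequence 0 → N → P → N → 0, P projective, such that N is not
pure-projective.
-/

universe u

namespace Stmt18

/-- `g : B →ₗ[R] C` is a pure epimorphism if it is surjective and every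
homomorphism from a finitely presented module `T` to `C` lifts to `B`. -/
def IsPureEpi (R : Type u) [Ring R] {B C : Type u} [AddCommGroup B]
    [Module R B] [AddCommGroup C] [Module R C] (g : B →ₗ[R] C) : Prop :=
  Function.Surjective g ∧
    ∀ (T : Type u) [AddCommGroup T] [Module R T],
      Module.FinitePresentation R T →
        ∀ h : T →ₗ[R] C, ∃ l : T →ₗ[R] B, g ∘ₗ l = h

/-- A module `P` is pure-projective if `Hom(P, −)` sends pure epimorphisms to
surjections. -/
def IsPureProjective (R : Type u) [Ring R] (P : Type u) [AddCommGroup P]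
    [Module R P] : Prop :=
  ∀ (B C : Type u) [AddCommGroup B] [Module R B] [AddCommGroup C] [Module R C]
    (g : B →ₗ[R] C), IsPureEpi R g →
      ∀ h : P →ₗ[R] C, ∃ l : P →ₗ[R] B, g ∘ₗ l = h

/-- The 4-dimensional Frobenius commutative algebra `R″ = k[x,y]/(x², y²)`. -/
abbrev Rpp (k : Type u) [Field k] :=
  MvPolynomial (Fin 2) k ⧸
    (Ideal.span {MvPolynomial.X 0 ^ 2, MvPolynomial.X 1 ^ 2} :
      Ideal (MvPolynomial (Fin 2) k))

section Helpers

open DirectSum in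
lemma not_pp_of {R N : Type u} [Ring R] [AddCommGroup N] [Module R N]
    (F : ℕ → Submodule R N) (hmono : Monotone F) (hcov : ∀ a, ∃ m, a ∈ F m) (z : N) (hz : z ≠ 0)
    (hF : ∀ m (φ : N →ₗ[R] F m), φ z = 0) : ¬ IsPureProjective R N := by
  intro hpp
  let π : (⨁ m, F m) →ₗ[R] N := DirectSum.toModule R ℕ N (fun m => (F m).subtype)
  have hπ : ∀ m (a : F m), π (DirectSum.lof R ℕ (fun m => F m) m a) = a.1 := by
    intro m a
    simp [π]
  have hpure : IsPureEpi R π := by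
    refine ⟨?_, ?_⟩
    · intro a
      obtain ⟨m, hm⟩ := hcov a
      exact ⟨_, hπ m ⟨a, hm⟩⟩
    · intro T _ _ hT h
      have hfin : Module.Finite R T := inferInstance
      obtain ⟨S, hS⟩ := hfin.fg_top
      choose ν hν using hcov
      have hr : ∀ t, h t ∈ F (S.sup fun t => ν (h t)) := by
        intro t
        have : (⊤ : Submodule R T) ≤ (F (S.sup fun t => ν (h t))).comap h := by
          rw [← hS, Submodule.span_le]
          intro t ht
          exact hmono (Finset.le_sup (f := fun t => ν (h t)) ht) (hν (h t))
        exact this trivial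
      refine ⟨DirectSum.lof R ℕ (fun m => F m) _ ∘ₗ h.codRestrict _ hr, ?_⟩
      ext1 t
      simp only [LinearMap.comp_apply, hπ]
      rfl
  obtain ⟨l, hl⟩ := hpp _ _ π hpure LinearMap.id
  apply hz
  have h0 : l z = 0 := by
    refine DFinsupp.ext fun m => ?_
    exact hF m ((DirectSum.component R ℕ (fun m => F m) m) ∘ₗ l)
  have := congrArg (fun f => f z) hl
  simp only [LinearMap.comp_apply, h0, map_zero, LinearMap.id_apply] at this
  exact this.symm

variable (k : Type u) [Field k]

/-- The class of the first variable. -/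
noncomputable def xx : Rpp k := Ideal.Quotient.mk _ (MvPolynomial.X 0)

/-- The class of the second variable. -/
noncomputable def yy : Rpp k := Ideal.Quotient.mk _ (MvPolynomial.X 1)

/-- Scalars. -/
noncomputable def cc : k →+* Rpp k := (Ideal.Quotient.mk _).comp MvPolynomial.C

lemma xx_sq : xx k * xx k = 0 := by
  unfold xx
  rw [← map_mul, Ideal.Quotient.eq_zero_iff_mem, ← pow_two]
  exact Ideal.subset_span (by simp)

lemma yy_sq : yy k * yy k = 0 := by
  unfold yy
  rw [← map_mul, Ideal.Quotient.eq_zero_iff_mem, ← pow_two]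
  exact Ideal.subset_span (by simp)

lemma exists_coords (r : Rpp k) : ∃ c p q s : k,
    r = cc k c + cc k p * xx k + cc k q * yy k + cc k s * (xx k * yy k) := by
  obtain ⟨f, rfl⟩ := Ideal.Quotient.mk_surjective r
  have hx := xx_sq k
  have hy := yy_sq k
  induction f using MvPolynomial.induction_on with
  | C a => exact ⟨a, 0, 0, 0, by simp [cc]⟩
  | add f g hf hg =>
    obtain ⟨c, p, q, s, h⟩ := hf
    obtain ⟨c', p', q', s', h'⟩ := hg
    refine ⟨c + c', p + p', q + q', s + s', ?_⟩
    rw [map_add, h, h']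
    simp only [map_add]
    ring
  | mul_X f i hf =>
    obtain ⟨c, p, q, s, h⟩ := hf
    rw [map_mul, h]
    fin_cases i
    · refine ⟨0, c, 0, q, ?_⟩
      change _ * xx k = _
      simp only [map_zero]
      linear_combination (cc k p + cc k s * yy k) * hx
    · refine ⟨0, 0, c, p, ?_⟩
      change _ * yy k = _
      simp only [map_zero]
      linear_combination (cc k q + cc k s * xx k) * hy

lemma sgn_sq (A : Type u) [CommRing A] (j : ℕ) : (-1 : A) ^ j * (-1) ^ j = 1 := by
  rw [← mul_pow, neg_one_mul, neg_neg, one_pow]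

/-- The evaluation homomorphism. -/
noncomputable def evDD : MvPolynomial (Fin 2) k →+* DualNumber (DualNumber k) :=
  MvPolynomial.eval₂Hom (algebraMap k (DualNumber (DualNumber k)))
    (![TrivSqZeroExt.inl (DualNumber.eps), DualNumber.eps] : Fin 2 → DualNumber (DualNumber k))

/-- Coordinates, as a ring homomorphism to iterated dual numbers. -/
noncomputable def toDD : Rpp k →+* DualNumber (DualNumber k) :=
  Ideal.Quotient.lift _ (evDD k) (by
    intro a ha
    change a ∈ RingHom.ker _
    revert a
    change Ideal.span _ ≤ _
    rw [Ideal.span_le]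
    rintro a (rfl | rfl)
    · simp [RingHom.mem_ker, pow_two, evDD, ← TrivSqZeroExt.inl_mul]
    · simp [RingHom.mem_ker, pow_two, evDD])

lemma toDD_x : toDD k (xx k) = TrivSqZeroExt.inl (DualNumber.eps) := by
  simp [toDD, xx, evDD]

lemma toDD_y : toDD k (yy k) = DualNumber.eps := by
  simp [toDD, yy, evDD]

lemma toDD_c (a : k) : toDD k (cc k a) = TrivSqZeroExt.inl (TrivSqZeroExt.inl a) := by
  simp [toDD, cc, evDD]
  rfl

lemma toDD_coords (c p q s : k) :
    toDD k (cc k c + cc k p * xx k + cc k q * yy k + cc k s * (xx k * yy k)) =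
      (((c, p), (q, s)) : (k × k) × (k × k)) := by
  simp only [map_add, map_mul, toDD_x, toDD_y, toDD_c]
  refine TrivSqZeroExt.ext (TrivSqZeroExt.ext ?_ ?_) (TrivSqZeroExt.ext ?_ ?_)
  · simp; rfl
  · simp; rfl
  · simp; rfl
  · simp; rfl

lemma coords_inj {c p q s c' p' q' s' : k}
    (h : cc k c + cc k p * xx k + cc k q * yy k + cc k s * (xx k * yy k) =
      cc k c' + cc k p' * xx k + cc k q' * yy k + cc k s' * (xx k * yy k)) :
    c = c' ∧ p = p' ∧ q = q' ∧ s = s' := by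
  have := congrArg (toDD k) h
  rw [toDD_coords, toDD_coords] at this
  have h2 : (((c, p), (q, s)) : (k × k) × (k × k)) = ((c', p'), (q', s')) := this
  simp only [Prod.mk.injEq] at h2
  tauto

lemma xy_ne : xx k * yy k ≠ 0 := by
  intro h
  have := coords_inj k (c := 0) (p := 0) (q := 0) (s := 1) (c' := 0) (p' := 0) (q' := 0) (s' := 0)
    (by simp [h])
  simp at this

/-- The differential. -/
noncomputable def dd : (ℕ →₀ Rpp k) →ₗ[Rpp k] (ℕ →₀ Rpp k) where
  toFun b := Finsupp.onFinset (b.support ∪ b.support.image Nat.pred)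
    (fun j => (-1) ^ j * xx k * b j + yy k * b (j + 1)) (by
      intro j hj
      simp only [Finset.mem_union, Finset.mem_image, Finsupp.mem_support_iff]
      by_contra! hc
      apply hj
      have h2 : b (j + 1) = 0 := by
        by_contra h3
        exact hc.2 (j + 1) h3 rfl
      rw [hc.1, h2]
      simp)
  map_add' a b := by
    ext1 j
    simp only [Finsupp.onFinset_apply, Finsupp.add_apply]
    ring
  map_smul' r b := by
    ext1 j
    simp only [Finsupp.onFinset_apply, Finsupp.smul_apply, smul_eq_mul, RingHom.id_apply]
    ring

lemma dd_apply (b : ℕ →₀ Rpp k) (j : ℕ) :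
    dd k b j = (-1) ^ j * xx k * b j + yy k * b (j + 1) := rfl

lemma dd_dd (b : ℕ →₀ Rpp k) : dd k (dd k b) = 0 := by
  ext1 j
  simp only [dd_apply, Finsupp.zero_apply]
  linear_combination ((-1) ^ j * (-1) ^ j * b j) * xx_sq k + b (j + 1 + 1) * yy_sq k

lemma exact_dd (a : ℕ →₀ Rpp k) (ha : dd k a = 0) : ∃ b, dd k b = a := by
  choose c p q s h using exists_coords k
  have hz := coords_inj k (c' := 0) (p' := 0) (q' := 0) (s' := 0) ((h 0).symm.trans (by simp))
  have key : ∀ j, c (a j) = 0 ∧ p (a (j + 1)) = - ((-1) ^ j * q (a j)) := by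
    intro j
    have h1 : dd k a j = 0 := by rw [ha]; rfl
    rw [dd_apply, h (a j), h (a (j + 1))] at h1
    have h2 := coords_inj k (c := 0) (p := (-1) ^ j * c (a j)) (q := c (a (j + 1)))
      (s := (-1) ^ j * q (a j) + p (a (j + 1)))
      (c' := 0) (p' := 0) (q' := 0) (s' := 0) (by
        simp only [map_zero, map_mul, map_add, map_pow, map_neg, map_one]
        rw [zero_mul, zero_mul, zero_mul]
        linear_combination h1 - ((-1) ^ j * (cc k (p (a j)) + cc k (s (a j)) * yy k)) * xx_sq k
          - (cc k (q (a (j + 1))) + cc k (s (a (j + 1))) * xx k) * yy_sq k)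
    refine ⟨by simpa using h2.2.1, ?_⟩
    linear_combination h2.2.2.2
  refine ⟨Finsupp.onFinset a.support
    (fun j => (-1) ^ j * (cc k (p (a j)) + cc k (s (a j)) * yy k)) ?_, ?_⟩
  · intro j hj
    rw [Finsupp.mem_support_iff]
    intro h0
    apply hj
    simp [h0, hz.2.1, hz.2.2.2]
  · ext1 j
    rw [dd_apply]
    simp only [Finsupp.onFinset_apply]
    conv_rhs => rw [h (a j), (key j).1]
    rw [(key j).2]
    have hs : ((-1 : Rpp k)) ^ j * (-1) ^ j = 1 := sgn_sq _ j
    simp only [map_zero, map_mul, map_pow, map_neg, map_one, pow_succ]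
    linear_combination (cc k (p (a j)) * xx k + cc k (s (a j)) * (xx k * yy k)
      + cc k (q (a j)) * yy k) * hs - (-1) ^ j * cc k (s (a (j + 1))) * yy_sq k

/-- The periodic module. -/
noncomputable abbrev NN : Submodule (Rpp k) (ℕ →₀ Rpp k) := LinearMap.ker (dd k)

/-- The finite stages. -/
noncomputable def NS (m : ℕ) : Submodule (Rpp k) (NN k) where
  carrier := {a | ∀ j, m ≤ j → a.1 j = 0}
  add_mem' := by
    intro a b ha hb j hj
    simp [ha j hj, hb j hj]
  zero_mem' := by
    intro j _
    simp
  smul_mem' := by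
    intro r a ha j hj
    simp [ha j hj]

lemma NS_mono : Monotone (NS k) := fun _ _ hmn _ ha j hj => ha j (hmn.trans hj)

lemma mem_NS (a : NN k) : ∃ m, a ∈ NS k m := by
  refine ⟨a.1.support.sup id + 1, fun j hj => ?_⟩
  by_contra h
  have := Finset.le_sup (f := id) (Finsupp.mem_support_iff.2 h)
  simp only [id] at this
  omega

/-- The generators. -/
noncomputable def gg (i : ℕ) : NN k :=
  ⟨dd k (Finsupp.single i 1), by rw [LinearMap.mem_ker, dd_dd]⟩

lemma gg_rel (i : ℕ) : yy k • gg k i = ((-1) ^ i * xx k) • gg k (i + 1) := by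
  apply Subtype.ext
  ext1 j
  simp only [gg, Submodule.coe_smul, Finsupp.smul_apply, dd_apply, smul_eq_mul,
    Finsupp.single_apply]
  by_cases hij : i = j
  · subst hij
    simp
    linear_combination 0 * xx_sq k
  · have h1 : ¬ (i + 1 = j + 1) := by omega
    simp only [hij, h1, if_false]
    linear_combination (if i = j + 1 then 1 else 0) * yy_sq k
      - ((-1) ^ i * (-1) ^ j * (if i + 1 = j then 1 else 0)) * xx_sq k

lemma NS_zero (m : ℕ) (φ : NN k →ₗ[Rpp k] NS k m) : φ (yy k • gg k 0) = 0 := by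
  have main : ∀ n i j, m ≤ j + n → yy k * (φ (gg k i)).1.1 j = 0 := by
    intro n
    induction n with
    | zero =>
      intro i j hj
      rw [(φ (gg k i)).2 j (by omega), mul_zero]
    | succ n ih =>
      intro i j hj
      have h1 : yy k * (φ (gg k i)).1.1 j = (-1) ^ i * xx k * (φ (gg k (i + 1))).1.1 j := by
        have := congrArg (fun z => (φ z).1.1 j) (gg_rel k i)
        simpa using this
      have h2 : dd k (φ (gg k (i + 1))).1.1 j = 0 := by
        rw [(φ (gg k (i + 1))).1.2]; rfl
      rw [dd_apply, ih (i + 1) (j + 1) (by omega), add_zero] at h2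
      have hs : ((-1 : Rpp k)) ^ j * (-1) ^ j = 1 := sgn_sq _ j
      rw [h1]
      linear_combination ((-1) ^ i * (-1) ^ j) * h2
        - ((-1) ^ i * xx k * (φ (gg k (i + 1))).1.1 j) * hs
  apply Subtype.ext
  apply Subtype.ext
  ext1 j
  simpa using main m 0 j (by omega)

lemma gg_ne : yy k • gg k 0 ≠ 0 := by
  intro h
  have := congrArg (fun z => z.1 0) h
  simp [gg, dd_apply] at this
  exact xy_ne k (by rw [mul_comm]; exact this)

lemma not_pp : ¬ IsPureProjective (Rpp k) (NN k) :=
  not_pp_of (NS k) (NS_mono k) (mem_NS k) _ (gg_ne k) (NS_zero k)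

end Helpers

/-- There is a `Proj`-periodic `R″`-module which is not pure-projective. -/
theorem exists_projPeriodic_not_pureProjective (k : Type u) [Field k] :
    ∃ (N : Type u) (_ : AddCommGroup N) (_ : Module (Rpp k) N)
      (P : Type u) (_ : AddCommGroup P) (_ : Module (Rpp k) P)
      (_ : Module.Projective (Rpp k) P)
      (f : N →ₗ[Rpp k] P) (g : P →ₗ[Rpp k] N),
      Function.Injective f ∧ Function.Surjective g ∧
      LinearMap.range f = LinearMap.ker g ∧
      ¬ IsPureProjective (Rpp k) N := by
  refine ⟨NN k, inferInstance, inferInstance, ℕ →₀ Rpp k, inferInstance, inferInstance,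
    inferInstance, (NN k).subtype,
    (dd k).codRestrict (NN k) (fun b => by rw [LinearMap.mem_ker, dd_dd]),
    Subtype.val_injective, ?_, ?_, not_pp k⟩
  · rintro ⟨a, ha⟩
    obtain ⟨b, hb⟩ := exact_dd k a ha
    exact ⟨b, Subtype.ext hb⟩
  · rw [LinearMap.ker_codRestrict, Submodule.range_subtype]

end Stmt18
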